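/- Let O be a Noetherian integrally closed domain with field of fractions F, let A be an O-algebra that is free and finitely generated as an O-module, let K be a finite Galois extension of F such that K ⊗_O A is split semisimple, and let O_K be the integral closure of O in K. Denote by {e_χ : χ ∈ Irr(KA)} the primitive central idempotents of KA := K ⊗_O A; Gal(K/F) permutes them. Then for χ, ψ ∈ Irr(KA), the idempotents e_χ and e_ψ are dominated by the same primitive idempotent of Z(A) if and only if there exists σ ∈ Gal(K/F) such that σ(e_χ) and e_ψ are dominated by the same primitive idempotent of Z(O_K ⊗_O A). -/

import Mathlib

open scoped TensorProduct
set_option synthInstance.maxHeartbeats 1000000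
set_option maxHeartbeats 1000000

/-- A block of a ring: a primitive idempotent of the center, i.e. a nonzero central idempotent
which cannot be written as a sum of two nonzero orthogonal central idempotents. -/
def IsBlockIdempotent {A : Type*} [Ring A] (e : A) : Prop :=
  e ∈ Subring.center A ∧ IsIdempotentElem e ∧ e ≠ 0 ∧
    ∀ f g : A, f ∈ Subring.center A → g ∈ Subring.center A →
      IsIdempotentElem f → IsIdempotentElem g → f * g = 0 → e = f + g → f = 0 ∨ g = 0

variable (O : Type) [CommRing O] [IsDomain O] [IsNoetherianRing O] [IsIntegrallyClosed O]
  (F : Type) [Field F] [Algebra O F] [IsFractionRing O F]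
  (K : Type) [Field K] [Algebra F K] [FiniteDimensional F K] [IsGalois F K]
  [Algebra O K] [IsScalarTower O F K]
  (A : Type) [Ring A] [Algebra O A] [Module.Finite O A] [Module.Free O A]

/-- `K ⊗_O A` is a split semisimple `K`-algebra: it is semisimple and every endomorphism of
every simple module is given by multiplication by a scalar of `K`. -/
def IsSplitSemisimpleTensor : Prop :=
  IsSemisimpleRing (K ⊗[O] A) ∧
    ∀ (M : Type) (_ : AddCommGroup M) (_ : Module (K ⊗[O] A) M),
      IsSimpleModule (K ⊗[O] A) M →
        ∀ f : M →ₗ[K ⊗[O] A] M, ∃ c : K, ∀ x : M, f x = algebraMap K (K ⊗[O] A) c • x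

/-- The semilinear action of `Gal(K/F)` on `K ⊗_O A` through the first factor:
`σ(λ ⊗ a) = σ(λ) ⊗ a`. -/
noncomputable def galoisActOnKTensor (σ : K ≃ₐ[F] K) : (K ⊗[O] A) ≃ₐ[O] (K ⊗[O] A) :=
  Algebra.TensorProduct.congr (AlgEquiv.restrictScalars O σ) AlgEquiv.refl

/-- The natural map `O_K ⊗_O A → K ⊗_O A` induced by the inclusion `O_K ⊆ K` of the integral
closure of `O` in `K`. -/
noncomputable def integralClosureTensorToKTensor :
    ((integralClosure O K) ⊗[O] A) →ₐ[O] (K ⊗[O] A) :=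
  Algebra.TensorProduct.map (IsScalarTower.toAlgHom O (integralClosure O K) K) (AlgHom.id O A)

/-!
The central idempotents of a ring form a Boolean algebra whose atoms are the blocks. Let `g` be a
block of `O_K ⊗ A`. It has finitely many Galois conjugates, because `K ⊗ A` has finitely many
central idempotents. Their join is Galois invariant, so it equals `1 ⊗ c` for a central idempotent
`c` of `A`: the fixed ring of `O_K` is `O`, and `A` is projective over `O`.

If a block `f` of `A` dominates `e` and `e'`, choose `g` dominating `e`. Then `1 ⊗ c` dominates `e`,
so `c * f = f` by primitivity of `f`, and hence `1 ⊗ c` dominates `e'` as well. Since `e'` is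
primitive, a single conjugate `σ(g)` dominates it, and `σ(g)` also dominates `σ(e)`. Conversely, if
`g` dominates `σ(e)` and `e'`, then the block of `A` dominating `e'` dominates `g`, hence `σ(e)`,
and therefore `e`, as the Galois action fixes it.
-/

/-- The central idempotents of a ring, that is, the idempotents of its center regarded as elements
of the ring. -/
def centralIdempotents (R : Type*) [Ring R] : Set R :=
  {z | z ∈ Subring.center R ∧ IsIdempotentElem z}

section CentralIdempotents

variable {R S : Type*} [Ring R] [Ring S] {z w : R}

theorem centralIdempotents.commute (hz : z ∈ centralIdempotents R) (x : R) : Commute z x :=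
  (Subring.mem_center_iff.1 hz.1 x).symm

theorem centralIdempotents.mul_mem (hz : z ∈ centralIdempotents R)
    (hw : w ∈ centralIdempotents R) : z * w ∈ centralIdempotents R :=
  ⟨Subring.mul_mem _ hz.1 hw.1, hz.2.mul_of_commute (commute hz w) hw.2⟩

theorem centralIdempotents.one_sub_mem (hz : z ∈ centralIdempotents R) :
    1 - z ∈ centralIdempotents R :=
  ⟨sub_mem (one_mem _) hz.1, hz.2.one_sub⟩

theorem centralIdempotents.map_mem {φ : R →+* S}
    (hφ : Subring.center R ≤ (Subring.center S).comap φ) (hz : z ∈ centralIdempotents R) :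
    φ z ∈ centralIdempotents S :=
  ⟨hφ hz.1, hz.2.map φ⟩

theorem centralIdempotents.smul_mem {G : Type*} [Group G] [MulSemiringAction G R] (s : G)
    (hz : z ∈ centralIdempotents R) : s • z ∈ centralIdempotents R := by
  refine ⟨Subring.mem_center_iff.2 fun x => ?_, hz.2.map (MulSemiringAction.toRingHom G R s)⟩
  have h := congrArg (s • ·) (Subring.mem_center_iff.1 hz.1 (s⁻¹ • x))
  simpa only [smul_mul', smul_inv_smul] using h

theorem finite_centralIdempotents_of_injective {φ : R →+* S}
    (hφ : Subring.center R ≤ (Subring.center S).comap φ) (hinj : Function.Injective φ)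
    (hS : (centralIdempotents S).Finite) : (centralIdempotents R).Finite :=
  hS.of_injOn (fun _ hz => centralIdempotents.map_mem hφ hz) hinj.injOn

theorem finite_centralIdempotents (k D : Type*) [CommRing k] [IsArtinianRing k] [Ring D]
    [Algebra k D] [Module.Finite k D] : (centralIdempotents D).Finite := by
  let Z := Subalgebra.center k D
  have : Module.Finite k Z := Module.IsNoetherian.finite k (Subalgebra.toSubmodule Z)
  have : IsArtinianRing Z := IsArtinianRing.of_finite k Z
  have : Finite (TopologicalSpace.Clopens (PrimeSpectrum Z)) :=
    Finite.of_injective _ SetLike.coe_injective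
  have : Finite {z : Z // IsIdempotentElem z} :=
    Finite.of_equiv _ PrimeSpectrum.isIdempotentElemEquivClopens.symm.toEquiv
  refine (Set.finite_range fun z : {z : Z // IsIdempotentElem z} => (z : D)).subset ?_
  exact fun z hz => ⟨⟨⟨z, hz.1⟩, Subtype.ext hz.2⟩, rfl⟩

end CentralIdempotents

/-- `q` is the join of the set `X` of central idempotents in the Boolean algebra of central
idempotents. The upper bound property is written `q * x = x`; minimality is expressed by membership
in the ideal generated by `X`, so that whatever `X` annihilates is annihilated by `q`. -/
structure IsCentralJoin {R : Type*} [Ring R] (X : Set R) (q : R) : Prop where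
  mem_centralIdempotents : q ∈ centralIdempotents R
  mul_eq_self : ∀ x ∈ X, q * x = x
  mem_span : q ∈ Ideal.span X

section IsCentralJoin

open scoped Pointwise

variable {R S : Type*} [Ring R] [Ring S] {X : Set R} {q q' : R}

theorem IsCentralJoin.map_mul_eq_zero (hq : IsCentralJoin X q) (φ : R →+* S) {y : S}
    (hy : ∀ x ∈ X, φ x * y = 0) : φ q * y = 0 := by
  obtain ⟨-, -, hmem⟩ := hq
  induction hmem using Submodule.span_induction with
  | mem x hx => exact hy x hx
  | zero => rw [map_zero, zero_mul]
  | add x x' _ _ hx hx' => rw [map_add, add_mul, hx, hx', add_zero]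
  | smul r x _ hx => rw [smul_eq_mul, map_mul, mul_assoc, hx, mul_zero]

theorem IsCentralJoin.unique (hq : IsCentralJoin X q) (hq' : IsCentralJoin X q') : q = q' := by
  have absorb {p p' : R} (hp : IsCentralJoin X p) (hp' : IsCentralJoin X p') : p = p * p' := by
    have h : p * (1 - p') = 0 := hp.map_mul_eq_zero (RingHom.id R) fun x hx => by
      rw [RingHom.id_apply, mul_sub, mul_one,
        ← (centralIdempotents.commute hp'.mem_centralIdempotents x).eq, hp'.mul_eq_self x hx,
        sub_self]
    rwa [mul_sub, mul_one, sub_eq_zero] at h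
  calc q = q * q' := absorb hq hq'
    _ = q' * q := centralIdempotents.commute hq.mem_centralIdempotents q'
    _ = q' := (absorb hq' hq).symm

theorem exists_isCentralJoin (hX : X.Finite) (hXc : X ⊆ centralIdempotents R) :
    ∃ q, IsCentralJoin X q := by
  induction X, hX using Set.Finite.induction_on with
  | empty => exact ⟨0, ⟨zero_mem _, IsIdempotentElem.zero⟩, by simp, zero_mem _⟩
  | @insert x X _ _ ih =>
    obtain ⟨hx, hX⟩ := Set.insert_subset_iff.1 hXc
    obtain ⟨q, hqc, hq, hqX⟩ := ih hX
    refine ⟨1 - (1 - q) * (1 - x), ?_, ?_, ?_⟩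
    · exact centralIdempotents.one_sub_mem <| centralIdempotents.mul_mem
        (centralIdempotents.one_sub_mem hqc) (centralIdempotents.one_sub_mem hx)
    · suffices ∀ y ∈ insert x X, (1 - q) * (1 - x) * y = 0 from fun y hy => by
        rw [sub_mul, one_mul, this y hy, sub_zero]
      rintro y (rfl | hy)
      · rw [mul_assoc, sub_mul 1 y, hx.2.eq, one_mul, sub_self, mul_zero]
      · rw [(centralIdempotents.commute (centralIdempotents.one_sub_mem hqc) _).eq, mul_assoc,
          sub_mul 1 q, hq y hy, one_mul, sub_self, mul_zero]
    · have hqX' : q ∈ Ideal.span (insert x X) := Ideal.span_mono (Set.subset_insert x X) hqX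
      have hxX : x ∈ Ideal.span (insert x X) := Ideal.subset_span (Set.mem_insert x X)
      have h : 1 - (1 - q) * (1 - x) = (1 - q) * x + q := by noncomm_ring
      rw [h]
      exact add_mem (Ideal.mul_mem_left _ _ hxX) hqX'

theorem IsCentralJoin.smul {G : Type*} [Group G] [MulSemiringAction G R] (s : G)
    (hq : IsCentralJoin X q) : IsCentralJoin (s • X) (s • q) where
  mem_centralIdempotents := centralIdempotents.smul_mem s hq.mem_centralIdempotents
  mul_eq_self := by
    rintro _ ⟨x, hx, rfl⟩
    simp only [← smul_mul', hq.mul_eq_self x hx]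
  mem_span := by
    have h := Ideal.mem_map_of_mem (MulSemiringAction.toRingHom G R s) hq.mem_span
    rwa [Ideal.map_span] at h

end IsCentralJoin

section Blocks

variable {R S : Type*} [Ring R] [Ring S] {e f z : R} {y : S}

theorem IsBlockIdempotent.mem_centralIdempotents (he : IsBlockIdempotent e) :
    e ∈ centralIdempotents R :=
  ⟨he.1, he.2.1⟩

theorem IsBlockIdempotent.ne_zero (he : IsBlockIdempotent e) : e ≠ 0 :=
  he.2.2.1

theorem IsBlockIdempotent.mul_eq_zero_or_mul_eq_self (he : IsBlockIdempotent e)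
    (hz : z ∈ centralIdempotents R) : z * e = 0 ∨ z * e = e := by
  have hze := centralIdempotents.mul_mem hz he.mem_centralIdempotents
  have hze' := centralIdempotents.mul_mem (centralIdempotents.one_sub_mem hz)
    he.mem_centralIdempotents
  have horth : z * e * ((1 - z) * e) = 0 := by
    rw [(centralIdempotents.commute hz e).eq, mul_assoc, ← mul_assoc z, mul_sub, mul_one,
      hz.2.eq, sub_self, zero_mul, mul_zero]
  have hsum : e = z * e + (1 - z) * e := by rw [← add_mul, add_sub_cancel, one_mul]
  refine (he.2.2.2 _ _ hze.1 hze'.1 hze.2 hze'.2 horth hsum).imp_right fun h => ?_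
  rwa [sub_mul, one_mul, sub_eq_zero, eq_comm] at h

theorem IsBlockIdempotent.smul {G : Type*} [Group G] [MulSemiringAction G R] (s : G)
    (he : IsBlockIdempotent e) : IsBlockIdempotent (s • e) := by
  have hse := centralIdempotents.smul_mem s he.mem_centralIdempotents
  refine ⟨hse.1, hse.2, (smul_ne_zero_iff_ne s).2 he.ne_zero, fun f g hf hg hfi hgi hfg h => ?_⟩
  have hf' := centralIdempotents.smul_mem s⁻¹ ⟨hf, hfi⟩
  have hg' := centralIdempotents.smul_mem s⁻¹ ⟨hg, hgi⟩
  have := he.2.2.2 _ _ hf'.1 hg'.1 hf'.2 hg'.2 (by rw [← smul_mul', hfg, smul_zero])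
    (by rw [← smul_add, ← h, inv_smul_smul])
  simpa only [smul_eq_zero_iff_eq] using this

theorem IsBlockIdempotent.mul_eq_self_of_map_mul_eq_self (hf : IsBlockIdempotent f)
    (hz : z ∈ centralIdempotents R) (φ : R →+* S) (hy : y ≠ 0) (hfy : φ f * y = y)
    (hzy : φ z * y = y) : z * f = f := by
  refine (hf.mul_eq_zero_or_mul_eq_self hz).resolve_left fun h => hy ?_
  rw [← hzy, ← hfy, ← mul_assoc, ← map_mul, h, map_zero, zero_mul]

theorem exists_isBlockIdempotent_map_mul_eq_self (hR : (centralIdempotents R).Finite)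
    {φ : R →+* S} (hφ : Subring.center R ≤ (Subring.center S).comap φ) {e : S}
    (he : IsBlockIdempotent e) : ∃ f : R, IsBlockIdempotent f ∧ φ f * e = e := by
  -- `f` is the complement of the join of all central idempotents that annihilate `e`.
  let X : Set R := {z ∈ centralIdempotents R | φ z * e = 0}
  obtain ⟨q, hq⟩ := exists_isCentralJoin (hR.subset (Set.sep_subset _ _) : X.Finite)
    (Set.sep_subset _ _)
  have hqe : φ q * e = 0 := hq.map_mul_eq_zero φ fun z hz => hz.2
  have hfe : φ (1 - q) * e = e := by rw [map_sub, map_one, sub_mul, one_mul, hqe, sub_zero]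
  have hf := centralIdempotents.one_sub_mem hq.mem_centralIdempotents
  have summand_eq_zero {a b : R} (ha : a ∈ centralIdempotents R) (hab : b * a = 0)
      (hsum : 1 - q = a + b) (hae : φ a * e = 0) : a = 0 := by
    have hqa : q * a = a := hq.mul_eq_self a ⟨ha, hae⟩
    have hfa : (1 - q) * a = a := by rw [hsum, add_mul, ha.2.eq, hab, add_zero]
    rwa [sub_mul, one_mul, hqa, sub_self, eq_comm] at hfa
  refine ⟨1 - q, ⟨hf.1, hf.2, ?_, fun a b ha hb hai hbi hab hsum => ?_⟩, hfe⟩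
  · intro h
    rw [h, map_zero, zero_mul] at hfe
    exact he.ne_zero hfe.symm
  · rcases he.mul_eq_zero_or_mul_eq_self (centralIdempotents.map_mem hφ ⟨ha, hai⟩) with h | h
    · refine Or.inl (summand_eq_zero ⟨ha, hai⟩ ?_ hsum h)
      rw [← (centralIdempotents.commute ⟨ha, hai⟩ b).eq, hab]
    · refine Or.inr (summand_eq_zero ⟨hb, hbi⟩ hab (hsum.trans (add_comm a b)) ?_)
      rwa [hsum, map_add, add_mul, h, add_eq_left] at hfe

end Blocks

section GroupAction

open scoped Pointwise

variable {A B C G : Type*} [Ring A] [Ring B] [Ring C] [Group G] [MulSemiringAction G B]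
  {ι : A →+* B} {φ : B →+* C} {e e' : C}

theorem exists_mem_centralIdempotents_map_eq (hι : Function.Injective ι)
    (hfix : ∀ b : B, (∀ s : G, s • b = b) → b ∈ ι.range) {q : B}
    (hq : q ∈ centralIdempotents B) (hqG : ∀ s : G, s • q = q) :
    ∃ c ∈ centralIdempotents A, ι c = q := by
  obtain ⟨c, rfl⟩ := hfix q hqG
  refine ⟨c, ⟨Subring.mem_center_iff.2 fun a => hι ?_, hι ?_⟩, rfl⟩
  · rw [map_mul, map_mul, (centralIdempotents.commute hq (ι a)).eq]
  · rw [map_mul, hq.2.eq]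

theorem exists_isCentralJoin_orbit (hB : (centralIdempotents B).Finite) {g : B}
    (hg : g ∈ centralIdempotents B) :
    ∃ q, IsCentralJoin (MulAction.orbit G g) q ∧ ∀ s : G, s • q = q := by
  have hX : MulAction.orbit G g ⊆ centralIdempotents B := by
    rintro _ ⟨s, rfl⟩
    exact centralIdempotents.smul_mem s hg
  obtain ⟨q, hq⟩ := exists_isCentralJoin (hB.subset hX) hX
  refine ⟨q, hq, fun s => IsCentralJoin.unique ?_ hq⟩
  simpa only [MulAction.smul_orbit] using hq.smul s

variable [MulSemiringAction G C]

theorem exists_smul_block_of_block (hB : (centralIdempotents B).Finite)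
    (hι : Function.Injective ι) (hfix : ∀ b : B, (∀ s : G, s • b = b) → b ∈ ι.range)
    (hφ : Subring.center B ≤ (Subring.center C).comap φ)
    (hφG : ∀ (s : G) (b : B), φ (s • b) = s • φ b)
    (he : IsBlockIdempotent e) (he' : IsBlockIdempotent e') {f : A} (hf : IsBlockIdempotent f)
    (hfe : φ (ι f) * e = e) (hfe' : φ (ι f) * e' = e') :
    ∃ (s : G) (g : B), IsBlockIdempotent g ∧ φ g * (s • e) = s • e ∧ φ g * e' = e' := by
  obtain ⟨g, hg, hge⟩ := exists_isBlockIdempotent_map_mul_eq_self hB hφ he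
  obtain ⟨q, hq, hqG⟩ := exists_isCentralJoin_orbit (G := G) hB hg.mem_centralIdempotents
  obtain ⟨c, hc, hcq⟩ := exists_mem_centralIdempotents_map_eq hι hfix hq.mem_centralIdempotents hqG
  have hqe : φ q * e = e := by
    rw [← hge, ← mul_assoc, ← map_mul, hq.mul_eq_self g (MulAction.mem_orbit_self g)]
  have hcf : c * f = f :=
    hf.mul_eq_self_of_map_mul_eq_self hc (φ.comp ι) he.ne_zero hfe (by simpa [hcq] using hqe)
  have hqe' : φ q * e' = e' := by
    rw [← hcq, ← hfe', ← mul_assoc, ← map_mul, ← map_mul, hcf]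
  obtain ⟨s, hs⟩ : ∃ s : G, φ (s • g) * e' ≠ 0 := by
    by_contra! h
    refine he'.ne_zero (hqe'.symm.trans (hq.map_mul_eq_zero φ ?_))
    rintro _ ⟨s, rfl⟩
    exact h s
  refine ⟨s, s • g, hg.smul s, ?_, ?_⟩
  · rw [hφG, ← smul_mul', hge]
  · exact (he'.mul_eq_zero_or_mul_eq_self
      (centralIdempotents.map_mem hφ (hg.smul s).mem_centralIdempotents)).resolve_left hs

theorem exists_block_of_smul_block (hA : (centralIdempotents A).Finite)
    (hιc : Subring.center A ≤ (Subring.center B).comap ι)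
    (hιG : ∀ (s : G) (a : A), s • ι a = ι a)
    (hφ : Subring.center B ≤ (Subring.center C).comap φ)
    (hφG : ∀ (s : G) (b : B), φ (s • b) = s • φ b)
    (he' : IsBlockIdempotent e') {s : G} {g : B} (hg : IsBlockIdempotent g)
    (hge : φ g * (s • e) = s • e) (hge' : φ g * e' = e') :
    ∃ f : A, IsBlockIdempotent f ∧ φ (ι f) * e = e ∧ φ (ι f) * e' = e' := by
  obtain ⟨f, hf, hfe'⟩ := exists_isBlockIdempotent_map_mul_eq_self hA
    (φ := φ.comp ι) (fun z hz => hφ (hιc hz)) he'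
  have hfg : ι f * g = g := hg.mul_eq_self_of_map_mul_eq_self
    (centralIdempotents.map_mem hιc hf.mem_centralIdempotents) φ he'.ne_zero hge' hfe'
  refine ⟨f, hf, smul_left_cancel s ?_, hfe'⟩
  calc s • (φ (ι f) * e) = φ (ι f) * (s • e) := by rw [smul_mul', ← hφG, hιG]
    _ = φ (ι f * g) * (s • e) := by rw [map_mul, mul_assoc, hge]
    _ = s • e := by rw [hfg, hge]

end GroupAction

section TensorProduct

variable {O S L A G : Type*} [CommRing O] [CommRing S] [Algebra O S] [CommRing L] [Algebra O L]
  [Ring A] [Algebra O A] [Group G]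

theorem mem_center_tensorProduct_iff {x : S ⊗[O] A} :
    x ∈ Subring.center (S ⊗[O] A) ↔ ∀ a : A, Commute (1 ⊗ₜ a) x := by
  refine ⟨fun hx a => Subring.mem_center_iff.1 hx _, fun hx => Subring.mem_center_iff.2 fun y => ?_⟩
  change Commute y x
  induction y with
  | zero => exact Commute.zero_left x
  | add y y' hy hy' => exact hy.add_left hy'
  | tmul s a =>
    have hs : s ⊗ₜ[O] a = algebraMap S (S ⊗[O] A) s * 1 ⊗ₜ a := by
      rw [Algebra.TensorProduct.algebraMap_apply, Algebra.TensorProduct.tmul_mul_tmul, mul_one,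
        one_mul, Algebra.algebraMap_self_apply]
    rw [hs]
    exact Commute.mul_left (Algebra.commutes s x) (hx a)

theorem center_le_comap_includeRight :
    Subring.center A ≤ (Subring.center (S ⊗[O] A)).comap
      (Algebra.TensorProduct.includeRight : A →ₐ[O] S ⊗[O] A) := fun _ hz =>
  mem_center_tensorProduct_iff.2 fun a =>
    Commute.map (Subring.mem_center_iff.1 hz a) Algebra.TensorProduct.includeRight

theorem center_le_comap_tensorProduct_map (f : S →ₐ[O] L) :
    Subring.center (S ⊗[O] A) ≤ (Subring.center (L ⊗[O] A)).comap
      (Algebra.TensorProduct.map f (AlgHom.id O A)) := fun _ hz =>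
  mem_center_tensorProduct_iff.2 fun a => by
    have h := Commute.map (mem_center_tensorProduct_iff.1 hz a)
      (Algebra.TensorProduct.map f (AlgHom.id O A))
    rwa [Algebra.TensorProduct.map_tmul, map_one, AlgHom.id_apply] at h

variable [MulSemiringAction G S] [SMulCommClass O G S] [MulSemiringAction G L] [SMulCommClass O G L]

/-- The action of a group on `S ⊗[O] A` through the first factor, `g • (s ⊗ a) = (g • s) ⊗ a`, is by
ring automorphisms. It extends Mathlib's additive action `TensorProduct.leftDistribMulAction`. -/
instance tensorProductMulSemiringAction : MulSemiringAction G (S ⊗[O] A) where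
  smul_one g := by
    rw [Algebra.TensorProduct.one_def, TensorProduct.smul_tmul', smul_one]
  smul_mul g x y := by
    induction x with
    | zero => simp only [zero_mul, smul_zero]
    | add x x' hx hx' => simp only [add_mul, smul_add, hx, hx']
    | tmul s a =>
      induction y with
      | zero => simp only [mul_zero, smul_zero]
      | add y y' hy hy' => simp only [mul_add, smul_add, hy, hy']
      | tmul t b =>
        simp only [Algebra.TensorProduct.tmul_mul_tmul, TensorProduct.smul_tmul', smul_mul']

theorem tensorProduct_map_smul {f : S →ₐ[O] L} (hf : ∀ (g : G) (s : S), f (g • s) = g • f s)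
    (g : G) (x : S ⊗[O] A) :
    Algebra.TensorProduct.map f (AlgHom.id O A) (g • x) =
      g • Algebra.TensorProduct.map f (AlgHom.id O A) x := by
  induction x with
  | zero => simp only [map_zero, smul_zero]
  | add x y hx hy => simp only [smul_add, map_add, hx, hy]
  | tmul s a => simp only [TensorProduct.smul_tmul', Algebra.TensorProduct.map_tmul, hf]

theorem smul_includeRight (g : G) (a : A) :
    g • (Algebra.TensorProduct.includeRight a : S ⊗[O] A) =
      Algebra.TensorProduct.includeRight a := by
  rw [Algebra.TensorProduct.includeRight_apply, TensorProduct.smul_tmul', smul_one]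

end TensorProduct

section Invariants

variable {O S G M N : Type*} [CommRing O] [CommRing S] [Algebra O S] [Group G]
  [MulSemiringAction G S] [SMulCommClass O G S]
  [AddCommGroup M] [Module O M] [AddCommGroup N] [Module O N]

theorem lTensor_smul (f : M →ₗ[O] N) (g : G) (x : S ⊗[O] M) :
    f.lTensor S (g • x) = g • f.lTensor S x := by
  induction x with
  | zero => simp only [map_zero, smul_zero]
  | add x y hx hy => simp only [smul_add, map_add, hx, hy]
  | tmul s m => simp only [TensorProduct.smul_tmul', LinearMap.lTensor_tmul]

theorem finsuppScalarRight_smul {κ : Type*} [DecidableEq κ] (g : G) (x : S ⊗[O] (κ →₀ O)) (i : κ) :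
    TensorProduct.finsuppScalarRight O O S κ (g • x) i =
      g • TensorProduct.finsuppScalarRight O O S κ x i := by
  induction x with
  | zero => simp only [map_zero, smul_zero, Finsupp.zero_apply]
  | add x y hx hy => simp only [smul_add, map_add, Finsupp.add_apply, hx, hy]
  | tmul s v =>
    simp only [TensorProduct.smul_tmul', TensorProduct.finsuppScalarRight_apply_tmul_apply,
      smul_comm]

theorem exists_one_tmul_finsupp_eq_of_forall_smul_eq [Algebra.IsInvariant O S G] {κ : Type*}
    {x : S ⊗[O] (κ →₀ O)} (hx : ∀ g : G, g • x = x) : ∃ v : κ →₀ O, 1 ⊗ₜ v = x := by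
  classical
  let coord := TensorProduct.finsuppScalarRight O O S κ
  have hcoord (i : κ) : ∃ o : O, algebraMap O S o = coord x i :=
    Algebra.IsInvariant.isInvariant (G := G) _ fun g => by
      rw [← finsuppScalarRight_smul, hx]
  choose o ho using hcoord
  refine ⟨Finsupp.indicator (coord x).support fun i _ => o i, coord.injective ?_⟩
  ext i
  rw [TensorProduct.finsuppScalarRight_apply_tmul_apply, Finsupp.indicator_apply,
    ← Algebra.algebraMap_eq_smul_one]
  split_ifs with hi
  · exact ho i
  · rw [map_zero, Finsupp.notMem_support_iff.1 hi]

theorem exists_one_tmul_eq_of_forall_smul_eq [Algebra.IsInvariant O S G] [Module.Projective O M]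
    {x : S ⊗[O] M} (hx : ∀ g : G, g • x = x) : ∃ m : M, 1 ⊗ₜ m = x := by
  obtain ⟨s, hs⟩ := Module.projective_def'.1 ‹Module.Projective O M›
  let r := Finsupp.linearCombination O (id : M → M)
  obtain ⟨v, hv⟩ := exists_one_tmul_finsupp_eq_of_forall_smul_eq (G := G) (x := s.lTensor S x)
    fun g => by rw [← lTensor_smul, hx]
  refine ⟨r v, ?_⟩
  calc 1 ⊗ₜ r v = r.lTensor S (s.lTensor S x) := by rw [← hv, LinearMap.lTensor_tmul]
    _ = x := by rw [← LinearMap.lTensor_comp_apply, hs, LinearMap.lTensor_id_apply]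

end Invariants

theorem integralClosure_isInvariant_gal (R E L : Type*) [CommRing R] [IsIntegrallyClosed R]
    [Field E] [Algebra R E] [IsFractionRing R E] [Field L] [Algebra E L] [IsGalois E L]
    [Algebra R L] [IsScalarTower R E L] :
    Algebra.IsInvariant R (integralClosure R L) (L ≃ₐ[E] L) := by
  refine ⟨fun x hx => ?_⟩
  obtain ⟨y, hy⟩ := (InfiniteGalois.mem_range_algebraMap_iff_fixed (k := E) (x : L)).2
    fun σ => congrArg Subtype.val (hx σ)
  have hyR : IsIntegral R y := by
    rw [← isIntegral_algebraMap_iff (algebraMap E L).injective, hy]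
    exact x.2
  obtain ⟨r, hr⟩ := IsIntegrallyClosed.algebraMap_eq_of_integral hyR
  refine ⟨r, Subtype.ext ?_⟩
  rw [← hy, ← hr, ← IsScalarTower.algebraMap_apply]
  rfl

section TensorProductBlocks

variable {O S L A G : Type*} [CommRing O] [CommRing S] [Algebra O S] [CommRing L]
  [IsArtinianRing L] [Algebra O L] [Ring A] [Algebra O A] [Module.Finite O A]
  [Module.Projective O A] [Group G]
  [MulSemiringAction G S] [SMulCommClass O G S] [MulSemiringAction G L] [SMulCommClass O G L]
  [Algebra.IsInvariant O S G]

theorem exists_block_iff_exists_smul_block_tensorProduct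
    (hO : Function.Injective (algebraMap O S)) {j : S →ₐ[O] L} (hj : Function.Injective j)
    (hjG : ∀ (g : G) (s : S), j (g • s) = g • j s) {e e' : L ⊗[O] A}
    (he : IsBlockIdempotent e) (he' : IsBlockIdempotent e') :
    (∃ f : A, IsBlockIdempotent f ∧
      (Algebra.TensorProduct.includeRight f : L ⊗[O] A) * e = e ∧
      (Algebra.TensorProduct.includeRight f : L ⊗[O] A) * e' = e') ↔
    ∃ (s : G) (g : S ⊗[O] A), IsBlockIdempotent g ∧
      Algebra.TensorProduct.map j (AlgHom.id O A) g * (s • e) = s • e ∧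
      Algebra.TensorProduct.map j (AlgHom.id O A) g * e' = e' := by
  let ι : A →ₐ[O] S ⊗[O] A := Algebra.TensorProduct.includeRight
  let φ := Algebra.TensorProduct.map j (AlgHom.id O A)
  have hφι (a : A) : φ (ι a) = Algebra.TensorProduct.includeRight a := by
    simp only [φ, ι, Algebra.TensorProduct.includeRight_apply, Algebra.TensorProduct.map_tmul,
      map_one, AlgHom.id_apply]
  have hι : Function.Injective ι := Algebra.TensorProduct.includeRight_injective hO
  have hφ : Function.Injective φ :=
    Module.Flat.rTensor_preserves_injective_linearMap j.toLinearMap hj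
  have hιc : Subring.center A ≤ (Subring.center _).comap ι.toRingHom := center_le_comap_includeRight
  have hφc : Subring.center _ ≤ (Subring.center _).comap φ.toRingHom :=
    center_le_comap_tensorProduct_map j
  have hB := finite_centralIdempotents_of_injective hφc hφ (finite_centralIdempotents L _)
  have hA := finite_centralIdempotents_of_injective hιc hι hB
  have hφG := tensorProduct_map_smul (A := A) hjG
  simp only [← hφι]
  constructor
  · rintro ⟨f, hf, hfe, hfe'⟩
    exact exists_smul_block_of_block hB hι
      (fun x hx => exists_one_tmul_eq_of_forall_smul_eq hx) hφc hφG he he' hf hfe hfe'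
  · rintro ⟨s, g, hg, hge, hge'⟩
    exact exists_block_of_smul_block hA hιc (smul_includeRight (G := G)) hφc hφG he' hg hge hge'

end TensorProductBlocks

theorem blocks_base_iff_exists_galois_blocks_integralClosure_general (R E L : Type*) {Λ : Type*}
    [CommRing R] [IsIntegrallyClosed R] [Field E] [Algebra R E] [IsFractionRing R E]
    [Field L] [Algebra E L] [IsGalois E L] [Algebra R L] [IsScalarTower R E L]
    [Ring Λ] [Algebra R Λ] [Module.Finite R Λ] [Module.Projective R Λ] {e e' : L ⊗[R] Λ}
    (he : IsBlockIdempotent e) (he' : IsBlockIdempotent e') :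
    (∃ f : Λ, IsBlockIdempotent f ∧
      (Algebra.TensorProduct.includeRight f : L ⊗[R] Λ) * e = e ∧
      (Algebra.TensorProduct.includeRight f : L ⊗[R] Λ) * e' = e') ↔
    ∃ (σ : L ≃ₐ[E] L) (g : integralClosure R L ⊗[R] Λ), IsBlockIdempotent g ∧
      Algebra.TensorProduct.map (integralClosure R L).val (AlgHom.id R Λ) g * (σ • e) = σ • e ∧
      Algebra.TensorProduct.map (integralClosure R L).val (AlgHom.id R Λ) g * e' = e' := by
  have : SMulCommClass R (L ≃ₐ[E] L) (integralClosure R L) := SMulCommClass.symm _ _ _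
  have := integralClosure_isInvariant_gal R E L
  have hRL : Function.Injective (algebraMap R L) := by
    rw [IsScalarTower.algebraMap_eq R E L]
    exact (algebraMap E L).injective.comp (IsFractionRing.injective R E)
  have hR : Function.Injective (algebraMap R (integralClosure R L)) :=
    fun x y hxy => hRL (congrArg Subtype.val hxy)
  exact exists_block_iff_exists_smul_block_tensorProduct hR Subtype.val_injective
    (fun _ _ => rfl) he he'

/-- With `O` a Noetherian integrally closed domain, `F` its fraction field,
`K/F` finite Galois such that `KA := K ⊗_O A` is split semisimple and `O_K` the integral
closure of `O` in `K`: two primitive central idempotents `e_χ`, `e_ψ` of `KA` are dominated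
by the same primitive idempotent of `Z(A)` if and only if there is `σ ∈ Gal(K/F)` such that
`σ(e_χ)` and `e_ψ` are dominated by the same primitive idempotent of `Z(O_K ⊗_O A)`. -/
theorem blocks_base_iff_exists_galois_blocks_integralClosure
    (hss : IsSplitSemisimpleTensor O K A)
    (e e' : K ⊗[O] A) (he : IsBlockIdempotent e) (he' : IsBlockIdempotent e') :
    (∃ f : A, IsBlockIdempotent f ∧
      (Algebra.TensorProduct.includeRight f : K ⊗[O] A) * e = e ∧
      (Algebra.TensorProduct.includeRight f : K ⊗[O] A) * e' = e') ↔
    (∃ (σ : K ≃ₐ[F] K) (g : (integralClosure O K) ⊗[O] A), IsBlockIdempotent g ∧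
      integralClosureTensorToKTensor O K A g * (galoisActOnKTensor O F K A σ e) =
        galoisActOnKTensor O F K A σ e ∧
      integralClosureTensorToKTensor O K A g * e' = e') := by
  exact blocks_base_iff_exists_galois_blocks_integralClosure_general O F K he he'
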